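/- Fix constants κ, δ, γ̃ > 0 with 2κ < δ. There exist ε₀, C, c > 0 such that for every r with 0 < r ≤ ε₀, every t ≥ 0 and all complex numbers a₀, a₁, a₂: |K̂₀(t,r) a₀ + K̂₁(t,r) a₁ + K̂₂(t,r) a₂ − Ĵ₀(t,r,a₂) − Ĵ₁(t,r,a₁,a₂)| ≤ C e^{-c r² t} ( |a₀| + |a₁| ), where, writing λ₁ = λ₁(r), λ_R = λ_R(r), λ_I = λ_I(r) and Q := 2λ_R λ₁ − λ_I² − λ_R² − λ₁², one sets Ĵ₀(t,r,a₂) := (cos(λ_I t) e^{λ_R t} − e^{λ₁ t}) a₂ / Q and Ĵ₁(t,r,a₁,a₂) := (−λ_I² sin(λ_I t) e^{λ_R t} a₁ − (λ_R − λ₁) sin(λ_I t) e^{λ_R t} a₂) / (λ_I Q). -/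

import Mathlib

/-!
STATEMENT 11. Second-order approximation of the small-frequency representation
`K̂₀a₀ + K̂₁a₁ + K̂₂a₂` of the Blackstock solution by `Ĵ₀ + Ĵ₁`, where with
`Q = 2λ_Rλ₁ − λ_I² − λ_R² − λ₁²`,
`Ĵ₀(t,r,a₂) = (cos(λ_I t)e^{λ_R t} − e^{λ₁ t}) a₂ / Q` and
`Ĵ₁(t,r,a₁,a₂) = (−λ_I² sin(λ_I t)e^{λ_R t} a₁ − (λ_R−λ₁) sin(λ_I t)e^{λ_R t} a₂)/(λ_I Q)`.
-/

/-!
The terms in `a₂` cancel identically, and no estimate is needed for them: with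
`D = (λ_R - λ₁)² + λ_I² = -Q`, partial fractions turn every kernel into a real combination of
`e^{λ₁ t}`, `sin(λ_I t) e^{λ_R t}` and `cos(λ_I t) e^{λ_R t}`, and the one for `K̂₂` is exactly the
`a₂`-part of `Ĵ₀ + Ĵ₁`. Subtracting the `a₁`-part of `Ĵ₁` removes from `K̂₁` the only coefficient
that is unbounded as `r → 0`, namely `λ_I / D ~ 1 / r`. What remains (`Khat0_eq`, `remainder1_eq`)
has bounded coefficients because `λ₁ = O(r²)`, `λ_R = O(r²)`, `λ_I ~ r` and `D ~ r²`.

These root bounds (`root_bounds`) follow from Vieta's relations. With `y = -λ₁`, `A = (δ+κ)r²` and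
`B = (1+γ̃r²)r²` these read `2λ_R = y - A`, `λ_R² + λ_I² = y² - Ay + B` and
`y(y² - Ay + B) = κr⁴`. For small `r` the quadratic factor lies between `r²/2` and `5r²/2`, so `y`
lies between `2κr²/5` and `2κr²`; then `2λ_R ≤ -(δ-κ)r² ≤ -κr²` by the hypothesis `2κ < δ`, which
makes both exponentials at most `e^{-κr²t/4}`.
-/

noncomputable section

/-- The characteristic cubic of the linear Blackstock model in the Fourier space. -/
def blackstockCubic (κ δ γt r : ℝ) (z : ℂ) : ℂ :=
  z ^ 3 + (((δ + κ) * r ^ 2 : ℝ) : ℂ) * z ^ 2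
    + (((1 + γt * r ^ 2) * r ^ 2 : ℝ) : ℂ) * z + ((κ * r ^ 4 : ℝ) : ℂ)

/-- `K̂₀(t) = Σⱼ e^{λⱼt} (Πₖ≠ⱼ λₖ)/(Πₖ≠ⱼ (λⱼ−λₖ))`. -/
def Khat0 (l1 l2 l3 : ℂ) (t : ℝ) : ℂ :=
  Complex.exp (l1 * t) * (l2 * l3) / ((l1 - l2) * (l1 - l3))
    + Complex.exp (l2 * t) * (l1 * l3) / ((l2 - l1) * (l2 - l3))
    + Complex.exp (l3 * t) * (l1 * l2) / ((l3 - l1) * (l3 - l2))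

/-- `K̂₁(t) = −Σⱼ e^{λⱼt} (Σₖ≠ⱼ λₖ)/(Πₖ≠ⱼ (λⱼ−λₖ))`. -/
def Khat1 (l1 l2 l3 : ℂ) (t : ℝ) : ℂ :=
  -(Complex.exp (l1 * t) * (l2 + l3) / ((l1 - l2) * (l1 - l3))
    + Complex.exp (l2 * t) * (l1 + l3) / ((l2 - l1) * (l2 - l3))
    + Complex.exp (l3 * t) * (l1 + l2) / ((l3 - l1) * (l3 - l2)))

/-- `K̂₂(t) = Σⱼ e^{λⱼt} / (Πₖ≠ⱼ (λⱼ−λₖ))`. -/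
def Khat2 (l1 l2 l3 : ℂ) (t : ℝ) : ℂ :=
  Complex.exp (l1 * t) / ((l1 - l2) * (l1 - l3))
    + Complex.exp (l2 * t) / ((l2 - l1) * (l2 - l3))
    + Complex.exp (l3 * t) / ((l3 - l1) * (l3 - l2))

/-- `Ĵ₀(t,r,a₂) = (cos(λ_I t)e^{λ_R t} − e^{λ₁ t}) a₂ / Q`. -/
def Jhat0 (l1 lR lI t : ℝ) (a2 : ℂ) : ℂ :=
  (((Real.cos (lI * t) * Real.exp (lR * t) - Real.exp (l1 * t)) /
      (2 * lR * l1 - lI ^ 2 - lR ^ 2 - l1 ^ 2) : ℝ) : ℂ) * a2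

/-- `Ĵ₁(t,r,a₁,a₂) = (−λ_I² sin(λ_I t)e^{λ_R t} a₁ − (λ_R−λ₁) sin(λ_I t)e^{λ_R t} a₂)/(λ_I Q)`. -/
def Jhat1 (l1 lR lI t : ℝ) (a1 a2 : ℂ) : ℂ :=
  (((-lI ^ 2 * Real.sin (lI * t) * Real.exp (lR * t)) /
      (lI * (2 * lR * l1 - lI ^ 2 - lR ^ 2 - l1 ^ 2)) : ℝ) : ℂ) * a1
    + (((-(lR - l1) * Real.sin (lI * t) * Real.exp (lR * t)) /
      (lI * (2 * lR * l1 - lI ^ 2 - lR ^ 2 - l1 ^ 2)) : ℝ) : ℂ) * a2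

/-! ### Partial fractions for the kernels -/

open Complex in
lemma exp_conj_pair (R I t : ℝ) :
    exp (((R : ℂ) + (I : ℂ) * Complex.I) * t)
        = Real.exp (R * t) * (Real.cos (I * t) + Real.sin (I * t) * Complex.I) ∧
    exp (((R : ℂ) - (I : ℂ) * Complex.I) * t)
        = Real.exp (R * t) * (Real.cos (I * t) - Real.sin (I * t) * Complex.I) := by
  constructor
  · rw [show ((R : ℂ) + (I : ℂ) * Complex.I) * t = ((R * t : ℝ) : ℂ) + ((I * t : ℝ) : ℂ) * Complex.I
      by push_cast; ring, Complex.exp_add, Complex.exp_mul_I]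
    push_cast; ring
  · rw [show ((R : ℂ) - (I : ℂ) * Complex.I) * t
        = ((R * t : ℝ) : ℂ) + (-(I * t : ℝ) : ℂ) * Complex.I
      by push_cast; ring, Complex.exp_add, Complex.exp_mul_I, Complex.cos_neg, Complex.sin_neg]
    push_cast; ring

/-- The partial-fraction denominators in terms of `D = (R - x)² + I²`. -/
lemma denominators (x R I : ℝ) (hI : 0 < I) :
    ((x : ℂ) - (R + I * Complex.I)) * (x - (R - I * Complex.I)) = (R - x) ^ 2 + I ^ 2 ∧
    (((R : ℂ) + I * Complex.I) - x) * ((R + I * Complex.I) - (R - I * Complex.I))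
      = (-(I + (R - x) * Complex.I) / (2 * I * ((R - x) ^ 2 + I ^ 2)))⁻¹ ∧
    (((R : ℂ) - I * Complex.I) - x) * ((R - I * Complex.I) - (R + I * Complex.I))
      = (-(I - (R - x) * Complex.I) / (2 * I * ((R - x) ^ 2 + I ^ 2)))⁻¹ := by
  have h2 := Complex.I_sq
  have hIc : (I : ℂ) ≠ 0 := by exact_mod_cast hI.ne'
  have hD : ((R : ℂ) - x) ^ 2 + I ^ 2 ≠ 0 := by
    have : (R - x) ^ 2 + I ^ 2 ≠ 0 := by positivity
    exact_mod_cast this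
  refine ⟨by linear_combination (-(I : ℂ) ^ 2) * h2, ?_, ?_⟩
  · refine eq_inv_of_mul_eq_one_left ?_
    field_simp
    linear_combination 2 * (I : ℂ) * (-(I : ℂ) ^ 2 - (R - x) ^ 2 - I * (R - x) * Complex.I) * h2
  · refine eq_inv_of_mul_eq_one_left ?_
    field_simp
    linear_combination 2 * (I : ℂ) * (-(I : ℂ) ^ 2 - (R - x) ^ 2 + I * (R - x) * Complex.I) * h2

lemma Khat0_eq (x R I t : ℝ) (hI : 0 < I) :
    Khat0 (x : ℂ) ((R : ℂ) + (I : ℂ) * Complex.I) ((R : ℂ) - (I : ℂ) * Complex.I) t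
      = ((Real.exp (x * t) * ((R ^ 2 + I ^ 2) / ((R - x) ^ 2 + I ^ 2))
        + Real.exp (R * t) *
          (Real.sin (I * t) * (x * (R ^ 2 - R * x - I ^ 2) / (I * ((R - x) ^ 2 + I ^ 2)))
            + Real.cos (I * t) * (x * (x - 2 * R) / ((R - x) ^ 2 + I ^ 2))) : ℝ) : ℂ) := by
  obtain ⟨h1, h3, h4⟩ := denominators x R I hI
  have h2 := Complex.I_sq
  have hIc : (I : ℂ) ≠ 0 := by exact_mod_cast hI.ne'
  have hD : ((R : ℂ) - x) ^ 2 + I ^ 2 ≠ 0 := by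
    have : (R - x) ^ 2 + I ^ 2 ≠ 0 := by positivity
    exact_mod_cast this
  obtain ⟨e2, e3⟩ := exp_conj_pair R I t
  unfold Khat0
  rw [h1, h3, h4, e2, e3, show Complex.exp ((x : ℂ) * t) = ((Real.exp (x * t) : ℝ) : ℂ) by simp]
  generalize Real.exp (x * t) = a
  generalize Real.exp (R * t) = b
  generalize Real.cos (I * t) = c
  generalize Real.sin (I * t) = s
  simp only [div_inv_eq_mul]
  push_cast
  field_simp
  ring_nf
  simp only [h2]
  ring

/-- `K̂₁` minus the coefficient of `a₁` in `Ĵ₁`. -/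
lemma remainder1_eq (x R I t : ℝ) (hI : 0 < I) :
    Khat1 (x : ℂ) ((R : ℂ) + (I : ℂ) * Complex.I) ((R : ℂ) - (I : ℂ) * Complex.I) t
      - (((-I ^ 2 * Real.sin (I * t) * Real.exp (R * t)) /
      (I * (2 * R * x - I ^ 2 - R ^ 2 - x ^ 2)) : ℝ) : ℂ)
      = ((Real.exp (x * t) * (-2 * R / ((R - x) ^ 2 + I ^ 2))
        + Real.exp (R * t) *
          (Real.sin (I * t) * ((x ^ 2 - R ^ 2) / (I * ((R - x) ^ 2 + I ^ 2)))
            + Real.cos (I * t) * (2 * R / ((R - x) ^ 2 + I ^ 2))) : ℝ) : ℂ) := by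
  obtain ⟨h1, h3, h4⟩ := denominators x R I hI
  have h2 := Complex.I_sq
  have hIc : (I : ℂ) ≠ 0 := by exact_mod_cast hI.ne'
  have hD : ((R : ℂ) - x) ^ 2 + I ^ 2 ≠ 0 := by
    have : (R - x) ^ 2 + I ^ 2 ≠ 0 := by positivity
    exact_mod_cast this
  obtain ⟨e2, e3⟩ := exp_conj_pair R I t
  unfold Khat1
  rw [h1, h3, h4, e2, e3, show Complex.exp ((x : ℂ) * t) = ((Real.exp (x * t) : ℝ) : ℂ) by simp,
    show 2 * R * x - I ^ 2 - R ^ 2 - x ^ 2 = -((R - x) ^ 2 + I ^ 2) by ring]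
  generalize Real.exp (x * t) = a
  generalize Real.exp (R * t) = b
  generalize Real.cos (I * t) = c
  generalize Real.sin (I * t) = s
  simp only [div_inv_eq_mul]
  push_cast
  field_simp
  ring_nf
  simp only [h2]
  ring

/-- `K̂₂` is exactly the coefficient of `a₂` in `Ĵ₀ + Ĵ₁`. -/
lemma Khat2_eq (x R I t : ℝ) (hI : 0 < I) :
    Khat2 (x : ℂ) ((R : ℂ) + (I : ℂ) * Complex.I) ((R : ℂ) - (I : ℂ) * Complex.I) t
      = (((Real.cos (I * t) * Real.exp (R * t) - Real.exp (x * t)) /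
      (2 * R * x - I ^ 2 - R ^ 2 - x ^ 2) : ℝ) : ℂ)
      + (((-(R - x) * Real.sin (I * t) * Real.exp (R * t)) /
      (I * (2 * R * x - I ^ 2 - R ^ 2 - x ^ 2)) : ℝ) : ℂ) := by
  obtain ⟨h1, h3, h4⟩ := denominators x R I hI
  have h2 := Complex.I_sq
  have hIc : (I : ℂ) ≠ 0 := by exact_mod_cast hI.ne'
  have hD : ((R : ℂ) - x) ^ 2 + I ^ 2 ≠ 0 := by
    have : (R - x) ^ 2 + I ^ 2 ≠ 0 := by positivity
    exact_mod_cast this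
  obtain ⟨e2, e3⟩ := exp_conj_pair R I t
  unfold Khat2
  rw [h1, h3, h4, e2, e3, show Complex.exp ((x : ℂ) * t) = ((Real.exp (x * t) : ℝ) : ℂ) by simp,
    show 2 * R * x - I ^ 2 - R ^ 2 - x ^ 2 = -((R - x) ^ 2 + I ^ 2) by ring]
  generalize Real.exp (x * t) = a
  generalize Real.exp (R * t) = b
  generalize Real.cos (I * t) = c
  generalize Real.sin (I * t) = s
  simp only [div_inv_eq_mul]
  push_cast
  field_simp
  ring_nf
  simp only [h2]
  ring

/-! ### Bounds for the characteristic roots -/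

/-- Vieta's relations; the last one is `R² + I² = λ₂λ₃`, written through `x` alone. -/
lemma vieta (κ δ γt r x R I : ℝ) (hI : 0 < I)
    (h1 : blackstockCubic κ δ γt r (x : ℂ) = 0)
    (h2 : blackstockCubic κ δ γt r ((R : ℂ) + (I : ℂ) * Complex.I) = 0) :
    2 * R = -x - (δ + κ) * r ^ 2 ∧
    -x * (x ^ 2 + (δ + κ) * r ^ 2 * x + (1 + γt * r ^ 2) * r ^ 2) = κ * r ^ 4 ∧
    R ^ 2 + I ^ 2 = x ^ 2 + (δ + κ) * r ^ 2 * x + (1 + γt * r ^ 2) * r ^ 2 := by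
  have hx : x ^ 3 + (δ + κ) * r ^ 2 * x ^ 2 + (1 + γt * r ^ 2) * r ^ 2 * x + κ * r ^ 4 = 0 := by
    unfold blackstockCubic at h1
    exact_mod_cast h1
  have hsplit : blackstockCubic κ δ γt r ((R : ℂ) + (I : ℂ) * Complex.I) =
      ((R ^ 3 - 3 * R * I ^ 2 + (δ + κ) * r ^ 2 * (R ^ 2 - I ^ 2)
        + (1 + γt * r ^ 2) * r ^ 2 * R + κ * r ^ 4 : ℝ) : ℂ)
      + ((I * (3 * R ^ 2 - I ^ 2 + 2 * ((δ + κ) * r ^ 2) * R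
        + (1 + γt * r ^ 2) * r ^ 2) : ℝ) : ℂ) * Complex.I := by
    unfold blackstockCubic
    push_cast
    linear_combination (3 * (R : ℂ) * I ^ 2 + I ^ 3 * Complex.I
      + (δ + κ) * r ^ 2 * I ^ 2) * Complex.I_sq
  rw [hsplit] at h2
  have hre := congrArg Complex.re h2
  have him := congrArg Complex.im h2
  simp only [Complex.add_re, Complex.add_im, Complex.re_ofReal_mul, Complex.im_ofReal_mul,
    Complex.ofReal_re, Complex.ofReal_im, Complex.I_re, Complex.I_im, Complex.zero_re,
    Complex.zero_im, mul_zero, mul_one, add_zero, zero_add] at hre him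
  have him' := (mul_eq_zero.mp him).resolve_left hI.ne'
  -- The cubic is `((z - R)² + I²) (z + A + 2R)`, and the first factor is positive on the real line.
  have hfac : ((x - R) ^ 2 + I ^ 2) * (x + (δ + κ) * r ^ 2 + 2 * R) = 0 := by
    linear_combination hx - hre - (x - R) * him'
  have hpos : (x - R) ^ 2 + I ^ 2 ≠ 0 := by positivity
  have hs := (mul_eq_zero.mp hfac).resolve_left hpos
  refine ⟨by linarith, by linarith, ?_⟩
  linear_combination -him' + (2 * R - x) * hs

/-- Location of the roots for small `r`: real parts of order `-r²`, frequency of order `r`. -/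
lemma root_bounds (κ δ γt r x R I : ℝ) (hκ : 0 < κ) (hκδ : 2 * κ < δ) (hγ : 0 < γt)
    (hr : 0 < r) (hM : (δ + κ) * r ≤ 1 / 2) (hγr : γt * r ^ 2 ≤ 1 / 2) (hI : 0 < I)
    (h1 : blackstockCubic κ δ γt r (x : ℂ) = 0)
    (h2 : blackstockCubic κ δ γt r ((R : ℂ) + (I : ℂ) * Complex.I) = 0) :
    x ≤ -(κ / 4) * r ^ 2 ∧ R ≤ -(κ / 4) * r ^ 2 ∧
    |x| ≤ 2 * (δ + κ) * r ^ 2 ∧ |R| ≤ (δ + κ) * r ^ 2 ∧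
    r / 2 ≤ I ∧ R ^ 2 + I ^ 2 ≤ 5 / 2 * r ^ 2 := by
  obtain ⟨hs, hp, hq⟩ := vieta κ δ γt r x R I hI h1 h2
  have hr2 : 0 < r ^ 2 := by positivity
  have hM0 : 0 < δ + κ := by linarith
  have hM2 : ((δ + κ) * r) ^ 2 ≤ 1 / 4 := by nlinarith [mul_pos hM0 hr]
  have hM4 : ((δ + κ) * r ^ 2) ^ 2 ≤ 1 / 4 * r ^ 2 := by nlinarith
  have hγ2 : 0 ≤ γt * r ^ 2 * r ^ 2 := by positivity
  rw [← hq] at hp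
  have hlow : r ^ 2 / 2 ≤ R ^ 2 + I ^ 2 := by
    rw [hq]; nlinarith [sq_nonneg (x + (δ + κ) * r ^ 2 / 2)]
  have hy0 : 0 < -x := by
    by_contra hneg
    have : 0 < κ * r ^ 4 := by positivity
    nlinarith
  have hyu : -x ≤ 2 * κ * r ^ 2 := by
    have : -x * (r ^ 2 / 2) ≤ κ * r ^ 4 := by nlinarith
    nlinarith
  have hκM : κ * r ^ 2 ≤ (δ + κ) * r ^ 2 := by nlinarith
  have hyM : -x ≤ 2 * ((δ + κ) * r ^ 2) := by linarith
  have hup : R ^ 2 + I ^ 2 ≤ 5 / 2 * r ^ 2 := by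
    rw [hq]
    have hx2 : x ^ 2 ≤ r ^ 2 := by nlinarith
    have : 0 ≤ (δ + κ) * r ^ 2 * (-x) := by positivity
    nlinarith
  have hyl : 2 / 5 * (κ * r ^ 2) ≤ -x := by
    have : κ * r ^ 4 ≤ -x * (5 / 2 * r ^ 2) := by
      rw [← hp]; exact mul_le_mul_of_nonneg_left hup hy0.le
    nlinarith
  have hκr : 0 < κ * r ^ 2 := by positivity
  have hδr : 2 * κ * r ^ 2 ≤ δ * r ^ 2 := by nlinarith
  have hRu : R ≤ -(κ / 4) * r ^ 2 := by linarith
  have hRabs : |R| ≤ (δ + κ) * r ^ 2 := by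
    have : 0 < (δ + κ) * r ^ 2 := by positivity
    rw [abs_le]; constructor <;> linarith
  refine ⟨by linarith, hRu, by rw [abs_le]; constructor <;> linarith, hRabs, ?_, hup⟩
  have hR2 : R ^ 2 ≤ 1 / 4 * r ^ 2 := by
    rw [← sq_abs R]; exact (pow_le_pow_left₀ (abs_nonneg _) hRabs 2).trans hM4
  nlinarith

/-! ### Bounds for the remainders -/

lemma combination_bound (a b s c p q w E P Q W : ℝ) (ha0 : 0 ≤ a) (hb0 : 0 ≤ b) (ha : a ≤ E)
    (hb : b ≤ E) (hs : |s| ≤ 1) (hc : |c| ≤ 1) (hp : |p| ≤ P) (hq : |q| ≤ Q) (hw : |w| ≤ W) :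
    |a * p + b * (s * q + c * w)| ≤ E * (P + Q + W) := by
  have hE : 0 ≤ E := ha0.trans ha
  have h1 : |a * p| ≤ E * P := by
    rw [abs_mul, abs_of_nonneg ha0]; gcongr
  have h2 : |s * q| ≤ 1 * Q := by rw [abs_mul]; gcongr
  have h3 : |c * w| ≤ 1 * W := by rw [abs_mul]; gcongr
  have h4 : |b * (s * q + c * w)| ≤ E * (Q + W) := by
    rw [abs_mul, abs_of_nonneg hb0]
    have := abs_add_le (s * q) (c * w)
    gcongr
    linarith
  have := abs_add_le (a * p) (b * (s * q + c * w))
  linarith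

/-- The coefficients in `Khat0_eq` and `remainder1_eq` are bounded uniformly in small `r`. -/
lemma coefficient_bounds (M r x R I : ℝ) (hM0 : 0 < M) (hr : 0 < r) (hM : M * r ≤ 1 / 2)
    (hx : |x| ≤ 2 * M * r ^ 2) (hR : |R| ≤ M * r ^ 2) (hI : r / 2 ≤ I)
    (hRI : R ^ 2 + I ^ 2 ≤ 5 / 2 * r ^ 2) :
    |(R ^ 2 + I ^ 2) / ((R - x) ^ 2 + I ^ 2)| ≤ 10 ∧
    |x * (R ^ 2 - R * x - I ^ 2) / (I * ((R - x) ^ 2 + I ^ 2))| ≤ 24 ∧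
    |x * (x - 2 * R) / ((R - x) ^ 2 + I ^ 2)| ≤ 8 ∧
    |-2 * R / ((R - x) ^ 2 + I ^ 2)| ≤ 8 * M ∧
    |(x ^ 2 - R ^ 2) / (I * ((R - x) ^ 2 + I ^ 2))| ≤ 20 * M ∧
    |2 * R / ((R - x) ^ 2 + I ^ 2)| ≤ 8 * M := by
  have hI0 : 0 < I := by linarith
  have hD : r ^ 2 / 4 ≤ (R - x) ^ 2 + I ^ 2 := by nlinarith [sq_nonneg (R - x)]
  have hr2 : 0 < r ^ 2 := by positivity
  have hID : r ^ 3 / 8 ≤ I * ((R - x) ^ 2 + I ^ 2) := by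
    calc r ^ 3 / 8 = r / 2 * (r ^ 2 / 4) := by ring
      _ ≤ _ := by gcongr
  set D := (R - x) ^ 2 + I ^ 2 with hDdef
  have hD0 : 0 < D := by linarith [div_pos hr2 four_pos]
  have hID0 : 0 < I * D := by positivity
  have hMr0 : 0 < M * r := by positivity
  have hM2 : (M * r) ^ 2 ≤ 1 / 4 := by nlinarith
  have hRx : |R * x| ≤ 1 / 2 * r ^ 2 := by
    rw [abs_mul]
    calc |R| * |x| ≤ (M * r ^ 2) * (2 * M * r ^ 2) := by gcongr
      _ = 2 * (M * r) ^ 2 * r ^ 2 := by ring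
      _ ≤ 2 * (1 / 4) * r ^ 2 := by gcongr
      _ = _ := by ring
  have hdiff : |x ^ 2 - R ^ 2| ≤ 4 * M ^ 2 * r ^ 4 := by
    have h1 : x ^ 2 ≤ (2 * M * r ^ 2) ^ 2 := by
      rw [← sq_abs x]; exact pow_le_pow_left₀ (abs_nonneg _) hx 2
    have h2 : R ^ 2 ≤ (M * r ^ 2) ^ 2 := by
      rw [← sq_abs R]; exact pow_le_pow_left₀ (abs_nonneg _) hR 2
    have h3 : 0 ≤ (M * r ^ 2) ^ 2 := by positivity
    rw [abs_le]
    constructor <;> nlinarith [sq_nonneg x, sq_nonneg R]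
  refine ⟨?_, ?_, ?_, ?_, ?_, ?_⟩
  · rw [abs_div, abs_of_pos hD0, div_le_iff₀ hD0, abs_of_nonneg (by positivity)]
    linarith
  · rw [abs_div, abs_of_pos hID0, div_le_iff₀ hID0, abs_mul]
    have h1 : |R ^ 2 - R * x - I ^ 2| ≤ 3 * r ^ 2 := by
      rw [abs_le] at hRx ⊢
      constructor <;> nlinarith [sq_nonneg R, sq_nonneg I]
    calc |x| * |R ^ 2 - R * x - I ^ 2| ≤ (2 * M * r ^ 2) * (3 * r ^ 2) := by gcongr
      _ = 6 * (M * r) * r ^ 3 := by ring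
      _ ≤ 6 * (1 / 2) * r ^ 3 := by gcongr
      _ ≤ 24 * (I * D) := by linarith
  · rw [abs_div, abs_of_pos hD0, div_le_iff₀ hD0, abs_mul]
    have h1 : |x - 2 * R| ≤ 4 * M * r ^ 2 := by
      rw [abs_le] at hx hR ⊢
      constructor <;> linarith
    calc |x| * |x - 2 * R| ≤ (2 * M * r ^ 2) * (4 * M * r ^ 2) := by gcongr
      _ = 8 * (M * r) ^ 2 * r ^ 2 := by ring
      _ ≤ 8 * (1 / 4) * r ^ 2 := by gcongr
      _ ≤ 8 * D := by linarith
  · rw [abs_div, abs_of_pos hD0, div_le_iff₀ hD0, abs_mul, abs_neg, abs_two]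
    nlinarith
  · rw [abs_div, abs_of_pos hID0, div_le_iff₀ hID0]
    calc |x ^ 2 - R ^ 2| ≤ 4 * M ^ 2 * r ^ 4 := hdiff
      _ = 4 * M * (M * r) * r ^ 3 := by ring
      _ ≤ 4 * M * (1 / 2) * r ^ 3 := by gcongr
      _ = 16 * M * (r ^ 3 / 8) := by ring
      _ ≤ 20 * M * (I * D) := by gcongr; norm_num
  · rw [abs_div, abs_of_pos hD0, div_le_iff₀ hD0, abs_mul, abs_two]
    nlinarith

/-! ### The approximation estimate -/

theorem blackstock_second_order_fourier_approximation
    (κ δ γt : ℝ) (hκ : 0 < κ) (hδ : 0 < δ) (hγt : 0 < γt) (hκδ : 2 * κ < δ) :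
    ∃ ε₀ C c : ℝ, 0 < ε₀ ∧ 0 < C ∧ 0 < c ∧ ∀ r : ℝ, 0 < r → r ≤ ε₀ →
      ∀ l1 lR lI : ℝ, 0 < lI →
        blackstockCubic κ δ γt r (l1 : ℂ) = 0 →
        blackstockCubic κ δ γt r ((lR : ℂ) + (lI : ℂ) * Complex.I) = 0 →
        ∀ t : ℝ, 0 ≤ t → ∀ a0 a1 a2 : ℂ,
          ‖Khat0 (l1 : ℂ) ((lR : ℂ) + (lI : ℂ) * Complex.I)
                ((lR : ℂ) - (lI : ℂ) * Complex.I) t * a0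
            + Khat1 (l1 : ℂ) ((lR : ℂ) + (lI : ℂ) * Complex.I)
                ((lR : ℂ) - (lI : ℂ) * Complex.I) t * a1
            + Khat2 (l1 : ℂ) ((lR : ℂ) + (lI : ℂ) * Complex.I)
                ((lR : ℂ) - (lI : ℂ) * Complex.I) t * a2
            - Jhat0 l1 lR lI t a2 - Jhat1 l1 lR lI t a1 a2‖
          ≤ C * Real.exp (-c * r ^ 2 * t) * (‖a0‖ + ‖a1‖) := by
  have hM0 : 0 < δ + κ := by linarith
  -- `42 = 10 + 24 + 8` bounds the coefficients of `K̂₀`, and `36 = 8 + 20 + 8`, times `δ + κ`,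
  -- those of the remainder of `K̂₁`.
  refine ⟨min 1 (min (1 / (2 * (δ + κ))) (1 / (2 * γt))), 42 + 36 * (δ + κ), κ / 4,
    by positivity, by positivity, by positivity, ?_⟩
  intro r hr hrε x R I hI h1 h2 t ht a0 a1 a2
  rw [le_min_iff, le_min_iff, le_div_iff₀ (by positivity), le_div_iff₀ (by positivity)] at hrε
  obtain ⟨hr1, hrM, hrγ⟩ := hrε
  have hM : (δ + κ) * r ≤ 1 / 2 := by linarith
  have hγr : γt * r ^ 2 ≤ 1 / 2 := by nlinarith [mul_pos hγt hr]
  obtain ⟨hx, hR, hxa, hRa, hIl, hRI⟩ :=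
    root_bounds κ δ γt r x R I hκ hκδ hγt hr hM hγr hI h1 h2
  obtain ⟨c1, c2, c3, c4, c5, c6⟩ := coefficient_bounds (δ + κ) r x R I hM0 hr hM hxa hRa hIl hRI
  have ea : Real.exp (x * t) ≤ Real.exp (-(κ / 4) * r ^ 2 * t) := by gcongr
  have eb : Real.exp (R * t) ≤ Real.exp (-(κ / 4) * r ^ 2 * t) := by gcongr
  have b0 := combination_bound _ _ _ _ _ _ _ _ _ _ _ (Real.exp_nonneg _) (Real.exp_nonneg _) ea eb
    (Real.abs_sin_le_one (I * t)) (Real.abs_cos_le_one (I * t)) c1 c2 c3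
  have b1 := combination_bound _ _ _ _ _ _ _ _ _ _ _ (Real.exp_nonneg _) (Real.exp_nonneg _) ea eb
    (Real.abs_sin_le_one (I * t)) (Real.abs_cos_le_one (I * t)) c4 c5 c6
  rw [← Real.norm_eq_abs, ← Complex.norm_real, ← Khat0_eq x R I t hI] at b0
  rw [← Real.norm_eq_abs, ← Complex.norm_real, ← remainder1_eq x R I t hI] at b1
  rw [Khat2_eq x R I t hI]
  unfold Jhat0 Jhat1
  set E := Real.exp (-(κ / 4) * r ^ 2 * t)
  have hE : 0 < E := Real.exp_pos _
  generalize Khat0 (x : ℂ) ((R : ℂ) + (I : ℂ) * Complex.I) ((R : ℂ) - (I : ℂ) * Complex.I) t = k0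
    at b0 ⊢
  generalize Khat1 (x : ℂ) ((R : ℂ) + (I : ℂ) * Complex.I) ((R : ℂ) - (I : ℂ) * Complex.I) t = k1
    at b1 ⊢
  generalize (((-I ^ 2 * Real.sin (I * t) * Real.exp (R * t)) /
      (I * (2 * R * x - I ^ 2 - R ^ 2 - x ^ 2)) : ℝ) : ℂ) = j1 at b1 ⊢
  refine le_trans (le_of_eq (congrArg norm (a₂ := k0 * a0 + (k1 - j1) * a1) (by ring))) ?_
  calc ‖k0 * a0 + (k1 - j1) * a1‖ ≤ ‖k0 * a0‖ + ‖(k1 - j1) * a1‖ := norm_add_le _ _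
    _ = ‖k0‖ * ‖a0‖ + ‖k1 - j1‖ * ‖a1‖ := by rw [norm_mul, norm_mul]
    _ ≤ ((42 + 36 * (δ + κ)) * E) * ‖a0‖ + ((42 + 36 * (δ + κ)) * E) * ‖a1‖ := by
      have hME : 0 < (δ + κ) * E := by positivity
      gcongr <;> nlinarith
    _ = _ := by ring

end
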